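/- Transitive percolation is order-invariant (generally covariant): the probability p^{c(Q)}(1−p)^{i(Q)} of generating a labelled partial order Q on m elements in a prescribed generation order does not depend on which linear extension of Q is used as the generation order. -/

import Mathlib

/-- The partial order generated by transitive percolation from the graph `g`:
the transitive closure of the directed edges (from lower to higher index). -/
def percRel (m : ℕ) (g : {q : Fin m × Fin m // q.1 < q.2} → Bool) (i j : Fin m) : Prop :=
  Relation.TransGen (fun i j : Fin m => ∃ h : i < j, g ⟨(i, j), h⟩ = true) i j

/-- The probability weight of a graph: each pair i < j is an edge with probability p,
independently. -/
def percWeight (m : ℕ) (p : ℝ) (g : {q : Fin m × Fin m // q.1 < q.2} → Bool) : ℝ :=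
  ∏ q : {q : Fin m × Fin m // q.1 < q.2}, (if g q then p else 1 - p)

theorem perc_transGen_equiv {β γ : Type} (e : β ≃ γ) (r : β → β → Prop) (s : γ → γ → Prop)
    (h : ∀ i j, r i j ↔ s (e i) (e j)) (i j : β) :
    Relation.TransGen r i j ↔ Relation.TransGen s (e i) (e j) := by
  constructor
  · exact fun H => Relation.TransGen.lift e (fun a b hab => (h a b).1 hab) _ _ H
  · intro H
    have := Relation.TransGen.lift (p := r) e.symm
      (fun a b hab => (h _ _).2 (by simpa using hab)) _ _ H
    simpa [Function.onFun] using this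

theorem percWeight_eq (m : ℕ) (p : ℝ) (g : {q : Fin m × Fin m // q.1 < q.2} → Bool) :
    percWeight m p g = p ^ (Finset.univ.filter (fun q => g q = true)).card *
      (1 - p) ^ (Fintype.card {q : Fin m × Fin m // q.1 < q.2} -
        (Finset.univ.filter (fun q => g q = true)).card) := by
  unfold percWeight
  rw [Finset.prod_ite, Finset.prod_const, Finset.prod_const]
  congr 2
  have := Finset.card_filter_add_card_filter_not
    (s := (Finset.univ : Finset {q : Fin m × Fin m // q.1 < q.2})) (fun q => g q = true)
  rw [Finset.card_univ] at this
  omega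

/-- The edge set, on the ground set, of a graph on the indices. -/
def percEdges {m : ℕ} {α : Type} (lam : Fin m ≃ α)
    (g : {q : Fin m × Fin m // q.1 < q.2} → Bool) : Finset (α × α) :=
  (Finset.univ.filter (fun q => g q = true)).map
    ((Function.Embedding.subtype _).trans (lam.prodCongr lam).toEmbedding)

theorem mem_percEdges {m : ℕ} {α : Type} (lam : Fin m ≃ α)
    (g : {q : Fin m × Fin m // q.1 < q.2} → Bool) (i j : Fin m) :
    (lam i, lam j) ∈ percEdges lam g ↔ ∃ h : i < j, g ⟨(i, j), h⟩ = true := by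
  simp only [percEdges, Finset.mem_map, Finset.mem_filter, Finset.mem_univ, true_and]
  constructor
  · rintro ⟨⟨⟨a, b⟩, hab⟩, hg, he⟩
    simp at he
    obtain ⟨rfl, rfl⟩ := he
    exact ⟨hab, hg⟩
  · rintro ⟨h, hg⟩
    exact ⟨_, hg, rfl⟩

open Classical in
theorem perc_sum_eq (m : ℕ) (p : ℝ) (α : Type) [Fintype α] (lt : α → α → Prop)
    (lam : Fin m ≃ α) (hle : ∀ i j, lt (lam i) (lam j) → i < j) :
    ∑ g ∈ Finset.univ.filter
        (fun g : {q : Fin m × Fin m // q.1 < q.2} → Bool =>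
          ∀ i j : Fin m, percRel m g i j ↔ lt (lam i) (lam j)),
      percWeight m p g
    = ∑ E ∈ Finset.univ.filter (fun E : Finset (α × α) =>
          ∀ x y, Relation.TransGen (fun x y => (x, y) ∈ E) x y ↔ lt x y),
      p ^ E.card * (1 - p) ^ (Fintype.card {q : Fin m × Fin m // q.1 < q.2} - E.card) := by
  have key : ∀ g i j, percRel m g i j ↔
      Relation.TransGen (fun x y => (x, y) ∈ percEdges lam g) (lam i) (lam j) := fun g i j =>
    perc_transGen_equiv lam _ _ (fun a b => (mem_percEdges lam g a b).symm) i j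
  have right : ∀ E : Finset (α × α),
      (∀ x y, Relation.TransGen (fun x y => (x, y) ∈ E) x y ↔ lt x y) →
      percEdges lam (fun q => decide ((lam q.1.1, lam q.1.2) ∈ E)) = E := by
    intro E hE
    ext ⟨x, y⟩
    obtain ⟨i, rfl⟩ := lam.surjective x
    obtain ⟨j, rfl⟩ := lam.surjective y
    rw [mem_percEdges]
    simp only [decide_eq_true_eq, exists_prop, and_iff_right_iff_imp]
    exact fun h => hle _ _ ((hE _ _).1 (Relation.TransGen.single h))
  refine Finset.sum_bij' (fun g _ => percEdges lam g)
    (fun E _ => fun q => decide ((lam q.1.1, lam q.1.2) ∈ E)) ?_ ?_ ?_ ?_ ?_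
  · intro g hg
    simp only [Finset.mem_filter, Finset.mem_univ, true_and] at hg ⊢
    intro x y
    obtain ⟨i, rfl⟩ := lam.surjective x
    obtain ⟨j, rfl⟩ := lam.surjective y
    rw [← key, hg]
  · intro E hE
    simp only [Finset.mem_filter, Finset.mem_univ, true_and] at hE ⊢
    intro i j
    rw [key, right E hE, hE]
  · intro g _
    funext ⟨⟨i, j⟩, h⟩
    have := mem_percEdges lam g i j
    simp only [h, exists_true_left] at this
    simp only [this, Bool.decide_eq_true]
  · intro E hE
    exact right E (by simpa using hE)
  · intro g _
    rw [percWeight_eq]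
    simp only [percEdges, Finset.card_map]

open Classical in
/-- Transitive percolation is generally covariant: the probability of generating a fixed
labelled poset Q (on ground set α) in the order prescribed by a linear extension λ does not
depend on which linear extension λ of Q is used as the generation order. -/
theorem transitive_percolation_order_invariant (m : ℕ) (p : ℝ) (hp : p ∈ Set.Ioo (0:ℝ) 1)
    (α : Type) (lt : α → α → Prop)
    (hirr : ∀ x, ¬ lt x x) (htrans : ∀ x y z, lt x y → lt y z → lt x z)
    (lam₁ lam₂ : Fin m ≃ α)
    (hle₁ : ∀ i j, lt (lam₁ i) (lam₁ j) → i < j)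
    (hle₂ : ∀ i j, lt (lam₂ i) (lam₂ j) → i < j) :
    ∑ g ∈ Finset.univ.filter
        (fun g : {q : Fin m × Fin m // q.1 < q.2} → Bool =>
          ∀ i j : Fin m, percRel m g i j ↔ lt (lam₁ i) (lam₁ j)),
      percWeight m p g
    = ∑ g ∈ Finset.univ.filter
        (fun g : {q : Fin m × Fin m // q.1 < q.2} → Bool =>
          ∀ i j : Fin m, percRel m g i j ↔ lt (lam₂ i) (lam₂ j)),
      percWeight m p g := by
  have : Fintype α := Fintype.ofEquiv _ lam₁
  rw [perc_sum_eq m p α lt lam₁ hle₁, perc_sum_eq m p α lt lam₂ hle₂]
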